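/- Let S be a regular semigroup and let R be a regular subsemigroup of T(S) containing the image of the embedding φ : s ↦ (s,s,σ). Then for each Green relation 𝓚 ∈ {𝓗, 𝓛, 𝓡, 𝓓, 𝓙}, the restriction of 𝓚 on T(S) to R equals the relation 𝓚 computed in R; and the restriction to R of the natural partial order of T(S) equals the natural partial order of R. -/

import Mathlib

namespace SemibandEmbed

/-- The two-element right-zero semigroup `R₂ = {σ, τ}`. -/
inductive R2 : Type where
  | σ : R2
  | τ : R2
  deriving DecidableEq

section GreenDefs

variable {S : Type*} [Semigroup S]

/-- Green's relation 𝓡 : `a 𝓡 b` iff `a S¹ = b S¹` (inside `S¹ = WithOne S`). -/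
def greenR (a b : S) : Prop :=
  {x : WithOne S | ∃ u : WithOne S, x = (a : WithOne S) * u} =
    {x : WithOne S | ∃ u : WithOne S, x = (b : WithOne S) * u}

/-- Green's relation 𝓛 : `a 𝓛 b` iff `S¹ a = S¹ b`. -/
def greenL (a b : S) : Prop :=
  {x : WithOne S | ∃ u : WithOne S, x = u * (a : WithOne S)} =
    {x : WithOne S | ∃ u : WithOne S, x = u * (b : WithOne S)}

/-- Green's relation 𝓗 = 𝓛 ∩ 𝓡. -/
def greenH (a b : S) : Prop := greenL a b ∧ greenR a b

/-- Green's relation 𝓓 : `a 𝓓 b` iff `a 𝓡 c` and `c 𝓛 b` for some `c`. -/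
def greenD (a b : S) : Prop := ∃ c : S, greenR a c ∧ greenL c b

/-- Green's relation 𝓙 : `a 𝓙 b` iff `S¹ a S¹ = S¹ b S¹`. -/
def greenJ (a b : S) : Prop :=
  {x : WithOne S | ∃ u v : WithOne S, x = u * (a : WithOne S) * v} =
    {x : WithOne S | ∃ u v : WithOne S, x = u * (b : WithOne S) * v}

/-- Mitsch's natural partial order on a semigroup. -/
def natLe (a b : S) : Prop := ∃ x y : S, a = x * b ∧ a = b * y ∧ a = a * y

end GreenDefs

/-- A semigroup is idempotent covered if every element `s` satisfies `s e = s = f s`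
for some idempotents `e`, `f`. -/
def IdemCovered (S : Type*) [Semigroup S] : Prop :=
  ∀ s : S, ∃ e f : S, IsIdempotentElem e ∧ IsIdempotentElem f ∧ s * e = s ∧ f * s = s

/-- A semigroup is regular if every `a` satisfies `a x a = a` for some `x`. -/
def IsRegularSemigroup (S : Type*) [Semigroup S] : Prop :=
  ∀ a : S, ∃ x : S, a * x * a = a

/-- A semigroup is periodic if every element generates a finite monogenic subsemigroup,
i.e. `aᵐ = aⁿ` for some `0 < m < n` (powers computed in `S¹ = WithOne S`). -/
def IsPeriodic (S : Type*) [Semigroup S] : Prop :=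
  ∀ a : S, ∃ m n : ℕ, 0 < m ∧ m < n ∧ (a : WithOne S) ^ m = (a : WithOne S) ^ n

/-- `𝓗` is a left congruence. -/
def IsLeftCongH (S : Type*) [Semigroup S] : Prop :=
  ∀ a b c : S, greenH a b → greenH (c * a) (c * b)

/-- `𝓗` is a right congruence. -/
def IsRightCongH (S : Type*) [Semigroup S] : Prop :=
  ∀ a b c : S, greenH a b → greenH (a * c) (b * c)

/-- A semigroup is completely regular if every element is 𝓗-related to an idempotent. -/
def IsCompletelyRegular (S : Type*) [Semigroup S] : Prop :=
  ∀ a : S, ∃ e : S, IsIdempotentElem e ∧ greenH a e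

section SemidirectProduct

variable {S : Type*} [Semigroup S]

/-- The multiplication of the semidirect product `(S × S) * R₂`:
`(t₁,s₁,σ)·(t₂,s₂,α) = (t₁s₂, s₁s₂, α)` and `(t₁,s₁,τ)·(t₂,s₂,α) = (t₁t₂, s₁t₂, α)`. -/
def sdMul (x y : S × S × R2) : S × S × R2 :=
  match x, y with
  | (t₁, s₁, R2.σ), (_, s₂, α) => (t₁ * s₂, s₁ * s₂, α)
  | (t₁, s₁, R2.τ), (t₂, _, α) => (t₁ * t₂, s₁ * t₂, α)

instance : Mul (S × S × R2) := ⟨sdMul⟩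

theorem sdMul_def (x y : S × S × R2) : x * y = sdMul x y := rfl

instance : Semigroup (S × S × R2) where
  mul_assoc x y z := by
    obtain ⟨t₁, s₁, α₁⟩ := x
    obtain ⟨t₂, s₂, α₂⟩ := y
    obtain ⟨t₃, s₃, α₃⟩ := z
    cases α₁ <;> cases α₂ <;> simp [sdMul_def, sdMul, mul_assoc]

/-- The set `E = {(s,t,α) ∈ E(T*R₂) : s ∈ S¹ t}`. -/
def Eset (S : Type*) [Semigroup S] : Set (S × S × R2) :=
  {x | IsIdempotentElem x ∧ ∃ a : WithOne S, (x.1 : WithOne S) = a * (x.2.1 : WithOne S)}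

/-- `T(S)`: the subsemigroup of the semidirect product generated by `E`. -/
def TS (S : Type*) [Semigroup S] : Subsemigroup (S × S × R2) :=
  Subsemigroup.closure (Eset S)

/-- Green's `𝓛` is a right congruence. -/
theorem greenL_mul_right {S : Type*} [Semigroup S] {a b : S} (hab : greenL a b) (c : S) :
    greenL (a * c) (b * c) := by
  have key : ∀ {a b : S}, greenL a b → ∀ x : WithOne S,
      (∃ u : WithOne S, x = u * ((a * c : S) : WithOne S)) →
      (∃ u : WithOne S, x = u * ((b * c : S) : WithOne S)) := by
    intro a b hab x hx
    obtain ⟨u, rfl⟩ := hx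
    have h1 : (u * (a : WithOne S)) ∈
        {x : WithOne S | ∃ u : WithOne S, x = u * (a : WithOne S)} := ⟨u, rfl⟩
    rw [greenL] at hab
    rw [hab] at h1
    obtain ⟨w, hw⟩ := h1
    refine ⟨w, ?_⟩
    rw [WithOne.coe_mul, WithOne.coe_mul, ← mul_assoc, hw, mul_assoc]
  have hab' : greenL b a := hab.symm
  ext x
  exact ⟨key hab x, key hab' x⟩

/-- `R(S) = {(s,t,α) ∈ T(S) : s 𝓛 t}`, a subsemigroup of `T(S)`. -/
def RS (S : Type*) [Semigroup S] : Subsemigroup ↥(TS S) where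
  carrier := {x | greenL (x : S × S × R2).1 (x : S × S × R2).2.1}
  mul_mem' := by
    rintro ⟨⟨s, t, α⟩, hx⟩ ⟨⟨u, v, β⟩, hy⟩ hxs hys
    simp only [Set.mem_setOf_eq] at hxs hys ⊢
    cases α <;> exact greenL_mul_right hxs _

end SemidirectProduct

/-! Let `b b' b = b`. Then `a ≤_𝓛 b`, `a ≤_𝓡 b` and the natural order `a ≤ b` amount to equations
in `a`, `b`, `b'`, so a subsemigroup containing all three elements sees the same relation as the
ambient semigroup. This settles `𝓛`, `𝓡`, `𝓗` and `≤` for any regular subsemigroup. For `𝓓` and `𝓙`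
the intermediate element `c` of `x 𝓡 c 𝓛 y`, respectively `x 𝓡 c ≤_𝓛 y`, has to lie in the
subsemigroup as well; since `c = x (x' c y') y`, it does whenever the subsemigroup is a bi-ideal.
Finally, a subsemigroup of `T(S)` containing all `(s, s, σ)` is a bi-ideal, because every product
`x z y` in `T(S)` equals `x (r, r, σ) y` for a suitable `r`. -/

section GreenPreorders

variable {S : Type*} [Semigroup S] {a b c : S}

/-- The preorder `a ≤_𝓛 b`, i.e. `S¹ a ⊆ S¹ b`, whose associated equivalence is `𝓛`. -/
def greenLeL (a b : S) : Prop := ∃ u : WithOne S, (a : WithOne S) = u * b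

/-- The preorder `a ≤_𝓡 b`, i.e. `a S¹ ⊆ b S¹`, whose associated equivalence is `𝓡`. -/
def greenLeR (a b : S) : Prop := ∃ u : WithOne S, (a : WithOne S) = b * u

/-- The preorder `a ≤_𝓙 b`, i.e. `S¹ a S¹ ⊆ S¹ b S¹`, whose associated equivalence is `𝓙`. -/
def greenLeJ (a b : S) : Prop := ∃ u v : WithOne S, (a : WithOne S) = u * b * v

theorem greenL_iff_greenLeL : greenL a b ↔ greenLeL a b ∧ greenLeL b a := by
  have subset_iff (a b : S) : {x : WithOne S | ∃ u : WithOne S, x = u * (a : WithOne S)} ⊆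
      {x : WithOne S | ∃ u : WithOne S, x = u * (b : WithOne S)} ↔ greenLeL a b := by
    refine ⟨fun h ↦ h ⟨1, (one_mul _).symm⟩, ?_⟩
    rintro ⟨u, hu⟩ _ ⟨w, rfl⟩
    exact ⟨w * u, by rw [hu, mul_assoc]⟩
  rw [greenL, Set.Subset.antisymm_iff, subset_iff, subset_iff]

theorem greenR_iff_greenLeR : greenR a b ↔ greenLeR a b ∧ greenLeR b a := by
  have subset_iff (a b : S) : {x : WithOne S | ∃ u : WithOne S, x = (a : WithOne S) * u} ⊆
      {x : WithOne S | ∃ u : WithOne S, x = (b : WithOne S) * u} ↔ greenLeR a b := by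
    refine ⟨fun h ↦ h ⟨1, (mul_one _).symm⟩, ?_⟩
    rintro ⟨u, hu⟩ _ ⟨w, rfl⟩
    exact ⟨u * w, by rw [hu, mul_assoc]⟩
  rw [greenR, Set.Subset.antisymm_iff, subset_iff, subset_iff]

theorem greenJ_iff_greenLeJ : greenJ a b ↔ greenLeJ a b ∧ greenLeJ b a := by
  have subset_iff (a b : S) : {x : WithOne S | ∃ u v : WithOne S, x = u * (a : WithOne S) * v} ⊆
      {x : WithOne S | ∃ u v : WithOne S, x = u * (b : WithOne S) * v} ↔ greenLeJ a b := by
    refine ⟨fun h ↦ h ⟨1, 1, by rw [one_mul, mul_one]⟩, ?_⟩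
    rintro ⟨u, v, huv⟩ _ ⟨w, z, rfl⟩
    exact ⟨w * u, v * z, by simp only [huv, mul_assoc]⟩
  rw [greenJ, Set.Subset.antisymm_iff, subset_iff, subset_iff]

theorem greenLeL_mul_left (a b : S) : greenLeL (a * b) b := ⟨a, WithOne.coe_mul a b⟩

theorem greenLeR_mul_right (a b : S) : greenLeR (a * b) a := ⟨b, WithOne.coe_mul a b⟩

theorem greenLeL.mul_right (h : greenLeL a b) (c : S) : greenLeL (a * c) (b * c) := by
  obtain ⟨u, hu⟩ := h
  exact ⟨u, by rw [WithOne.coe_mul, WithOne.coe_mul, hu, mul_assoc]⟩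

theorem greenLeL.mul_left (h : greenLeL a b) (c : S) : greenLeL (c * a) b := by
  obtain ⟨u, hu⟩ := h
  exact ⟨c * u, by rw [WithOne.coe_mul, hu, mul_assoc]⟩

theorem greenLeR.mul_left (h : greenLeR a b) (c : S) : greenLeR (c * a) (c * b) := by
  obtain ⟨u, hu⟩ := h
  exact ⟨u, by rw [WithOne.coe_mul, WithOne.coe_mul, hu, mul_assoc]⟩

theorem greenLeJ_of_greenLeR_of_greenLeL (hac : greenLeR a c) (hcb : greenLeL c b) :
    greenLeJ a b := by
  obtain ⟨v, hv⟩ := hac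
  obtain ⟨u, hu⟩ := hcb
  exact ⟨u, v, by rw [hv, hu]⟩

theorem greenLeJ.exists_greenLeR_greenLeL (h : greenLeJ a b) :
    ∃ c, greenLeR a c ∧ greenLeL c b := by
  obtain ⟨u, v, h⟩ := h
  cases u with
  | one => exact ⟨b, ⟨v, by rw [h, one_mul]⟩, ⟨1, (one_mul _).symm⟩⟩
  | coe u => exact ⟨u * b, ⟨v, by rw [h, WithOne.coe_mul]⟩, greenLeL_mul_left u b⟩

end GreenPreorders

section RegularElements

variable {S : Type*} [Semigroup S] {a b b' : S}

/-- An element `a` is regular if `a x a = a` for some `x`; `IsRegularSemigroup S` says that all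
elements of `S` are. -/
def IsRegularElement (a : S) : Prop := ∃ x : S, a * x * a = a

theorem greenLeL_iff_mul_eq (hb : b * b' * b = b) : greenLeL a b ↔ a * b' * b = a := by
  refine ⟨?_, fun h ↦ h ▸ greenLeL_mul_left (a * b') b⟩
  rintro ⟨u, hu⟩
  rw [← WithOne.coe_inj, mul_assoc, WithOne.coe_mul, hu, mul_assoc, ← WithOne.coe_mul, ← mul_assoc,
    hb]

theorem greenLeR_iff_mul_eq (hb : b * b' * b = b) : greenLeR a b ↔ b * b' * a = a := by
  refine ⟨?_, fun h ↦ h ▸ mul_assoc b b' a ▸ greenLeR_mul_right b (b' * a)⟩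
  rintro ⟨u, hu⟩
  rw [← WithOne.coe_inj, WithOne.coe_mul, hu, ← mul_assoc, ← WithOne.coe_mul, hb]

theorem natLe_iff_mul_eq (hb : b * b' * b = b) :
    natLe a b ↔ a * b' * b = a ∧ b * b' * a = a ∧ a * b' * a = a := by
  constructor
  · rintro ⟨x, y, hx, hy, hay⟩
    have h_left : a * b' * b = a := (greenLeL_iff_mul_eq hb).1 (hx ▸ greenLeL_mul_left x b)
    have h_right : b * b' * a = a := (greenLeR_iff_mul_eq hb).1 (hy ▸ greenLeR_mul_right b y)
    refine ⟨h_left, h_right, ?_⟩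
    calc a * b' * a = a * b' * b * y := by rw [mul_assoc (a * b'), ← hy]
      _ = a := by rw [h_left, ← hay]
  · rintro ⟨h_left, h_right, h_mid⟩
    exact ⟨a * b', b' * a, h_left.symm, by rw [← mul_assoc, h_right], by rw [← mul_assoc, h_mid]⟩

theorem greenLeJ_iff_exists_greenR_greenLeL (ha : IsRegularElement a) :
    greenLeJ a b ↔ ∃ c, greenR a c ∧ greenLeL c b := by
  obtain ⟨a', ha⟩ := ha
  constructor
  · intro h
    obtain ⟨c, hac, hcb⟩ := h.exists_greenLeR_greenLeL
    have h_le : greenLeR a (a * a' * c) := by simpa only [ha] using hac.mul_left (a * a')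
    have h_ge : greenLeR (a * a' * c) a := mul_assoc a a' c ▸ greenLeR_mul_right a (a' * c)
    exact ⟨a * a' * c, greenR_iff_greenLeR.2 ⟨h_le, h_ge⟩, hcb.mul_left _⟩
  · rintro ⟨c, hac, hcb⟩
    exact greenLeJ_of_greenLeR_of_greenLeL (greenR_iff_greenLeR.1 hac).1 hcb

end RegularElements

section RegularSubsemigroup

variable {T : Type*} [Semigroup T] {R : Subsemigroup T} {x y : R}

theorem IsRegularElement.coe (hx : IsRegularElement x) : IsRegularElement (x : T) := by
  obtain ⟨x', hx⟩ := hx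
  exact ⟨x', congrArg Subtype.val hx⟩

theorem greenLeL_coe_iff (hy : IsRegularElement y) :
    greenLeL x y ↔ greenLeL (x : T) (y : T) := by
  obtain ⟨y', hy⟩ := hy
  rw [greenLeL_iff_mul_eq hy, greenLeL_iff_mul_eq (congrArg Subtype.val hy), Subtype.ext_iff]
  rfl

theorem greenLeR_coe_iff (hy : IsRegularElement y) :
    greenLeR x y ↔ greenLeR (x : T) (y : T) := by
  obtain ⟨y', hy⟩ := hy
  rw [greenLeR_iff_mul_eq hy, greenLeR_iff_mul_eq (congrArg Subtype.val hy), Subtype.ext_iff]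
  rfl

theorem natLe_coe_iff (hy : IsRegularElement y) : natLe x y ↔ natLe (x : T) (y : T) := by
  obtain ⟨y', hy⟩ := hy
  rw [natLe_iff_mul_eq hy, natLe_iff_mul_eq (congrArg Subtype.val hy)]
  simp only [Subtype.ext_iff, MulMemClass.coe_mul]

theorem greenL_coe_iff (hx : IsRegularElement x) (hy : IsRegularElement y) :
    greenL x y ↔ greenL (x : T) (y : T) := by
  rw [greenL_iff_greenLeL, greenL_iff_greenLeL, greenLeL_coe_iff hx, greenLeL_coe_iff hy]

theorem greenR_coe_iff (hx : IsRegularElement x) (hy : IsRegularElement y) :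
    greenR x y ↔ greenR (x : T) (y : T) := by
  rw [greenR_iff_greenLeR, greenR_iff_greenLeR, greenLeR_coe_iff hx, greenLeR_coe_iff hy]

theorem greenH_coe_iff (hx : IsRegularElement x) (hy : IsRegularElement y) :
    greenH x y ↔ greenH (x : T) (y : T) :=
  and_congr (greenL_coe_iff hx hy) (greenR_coe_iff hx hy)

end RegularSubsemigroup

section BiIdeal

variable {T : Type*} [Semigroup T] {R : Subsemigroup T}

/-- A subsemigroup `R` of `T` is a bi-ideal if `R T R ⊆ R`. -/
def IsBiIdeal (R : Subsemigroup T) : Prop := ∀ x ∈ R, ∀ z : T, ∀ y ∈ R, x * z * y ∈ R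

theorem IsBiIdeal.mem_of_greenLeR_of_greenLeL (hR : IsBiIdeal R) {x y c : T} (hx : x ∈ R)
    (hy : y ∈ R) (hx_reg : IsRegularElement x) (hy_reg : IsRegularElement y)
    (hcx : greenLeR c x) (hcy : greenLeL c y) : c ∈ R := by
  obtain ⟨x', hx'⟩ := hx_reg
  obtain ⟨y', hy'⟩ := hy_reg
  have hc : c = x * (x' * c * y') * y :=
    calc c = x * x' * c := ((greenLeR_iff_mul_eq hx').1 hcx).symm
      _ = x * x' * (c * y' * y) := by rw [(greenLeL_iff_mul_eq hy').1 hcy]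
      _ = x * (x' * c * y') * y := by simp only [mul_assoc]
  exact hc ▸ hR x hx _ y hy

theorem IsBiIdeal.greenD_coe_iff (hR : IsBiIdeal R) (hreg : IsRegularSemigroup R) {x y : R} :
    greenD x y ↔ greenD (x : T) (y : T) := by
  constructor
  · rintro ⟨c, hxc, hcy⟩
    exact ⟨c, (greenR_coe_iff (hreg x) (hreg c)).1 hxc, (greenL_coe_iff (hreg c) (hreg y)).1 hcy⟩
  · rintro ⟨c, hxc, hcy⟩
    have hc : c ∈ R := hR.mem_of_greenLeR_of_greenLeL x.2 y.2 (IsRegularElement.coe (hreg x))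
      (IsRegularElement.coe (hreg y)) (greenR_iff_greenLeR.1 hxc).2 (greenL_iff_greenLeL.1 hcy).1
    lift c to R using hc
    exact ⟨c, (greenR_coe_iff (hreg x) (hreg c)).2 hxc, (greenL_coe_iff (hreg c) (hreg y)).2 hcy⟩

theorem IsBiIdeal.greenLeJ_coe_iff (hR : IsBiIdeal R) (hreg : IsRegularSemigroup R) {x y : R} :
    greenLeJ x y ↔ greenLeJ (x : T) (y : T) := by
  have hx : IsRegularElement (x : T) := IsRegularElement.coe (hreg x)
  have hy : IsRegularElement (y : T) := IsRegularElement.coe (hreg y)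
  rw [greenLeJ_iff_exists_greenR_greenLeL (hreg x), greenLeJ_iff_exists_greenR_greenLeL hx]
  constructor
  · rintro ⟨c, hxc, hcy⟩
    exact ⟨c, (greenR_coe_iff (hreg x) (hreg c)).1 hxc, (greenLeL_coe_iff (hreg y)).1 hcy⟩
  · rintro ⟨c, hxc, hcy⟩
    have hc : c ∈ R :=
      hR.mem_of_greenLeR_of_greenLeL x.2 y.2 hx hy (greenR_iff_greenLeR.1 hxc).2 hcy
    lift c to R using hc
    exact ⟨c, (greenR_coe_iff (hreg x) (hreg c)).2 hxc, (greenLeL_coe_iff (hreg y)).2 hcy⟩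

theorem IsBiIdeal.greenJ_coe_iff (hR : IsBiIdeal R) (hreg : IsRegularSemigroup R) {x y : R} :
    greenJ x y ↔ greenJ (x : T) (y : T) := by
  rw [greenJ_iff_greenLeJ, greenJ_iff_greenLeJ, hR.greenLeJ_coe_iff hreg, hR.greenLeJ_coe_iff hreg]

end BiIdeal

section SemidirectProductBiIdeal

variable {S : Type*} [Semigroup S]

/-- The entry of `y` by which a left factor with last entry `α` multiplies: `t` for `y = (s, t, β)`
and `α = σ`, and `s` for `α = τ`. -/
def R2.coord : R2 → S × S × R2 → S
  | R2.σ, y => y.2.1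
  | R2.τ, y => y.1

theorem mul_eq_mk_coord (x y : S × S × R2) :
    x * y = (x.1 * x.2.2.coord y, x.2.1 * x.2.2.coord y, y.2.2) := by
  obtain ⟨s, t, α⟩ := x
  cases α <;> rfl

theorem mul_diag_mul_eq_mk (x y : S × S × R2) (r : S) :
    x * (r, r, R2.σ) * y = (x.1 * (r * y.2.1), x.2.1 * (r * y.2.1), y.2.2) := by
  have coord_diag : x.2.2.coord (r, r, R2.σ) = r := by cases x.2.2 <;> rfl
  rw [mul_eq_mk_coord x, coord_diag, mul_eq_mk_coord, R2.coord, mul_assoc, mul_assoc]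

theorem exists_mul_mul_eq_mul_diag_mul (x z : S × S × R2) {y : S × S × R2}
    (hy : greenLeL y.1 y.2.1) (hreg : IsRegularElement y.2.1) :
    ∃ r : S, x * z * y = x * (r, r, R2.σ) * y := by
  obtain ⟨q, hq⟩ := hreg
  have coord_le : greenLeL (z.2.2.coord y) y.2.1 := by
    cases z.2.2
    · exact ⟨1, (one_mul _).symm⟩
    · exact hy
  have coord_eq : z.2.2.coord y * q * y.2.1 = z.2.2.coord y := (greenLeL_iff_mul_eq hq).1 coord_le
  refine ⟨x.2.2.coord z * (z.2.2.coord y * q), ?_⟩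
  rw [mul_diag_mul_eq_mk, mul_assoc (x.2.2.coord z), coord_eq, mul_eq_mk_coord (x * z),
    mul_eq_mk_coord x]
  simp only [mul_assoc]

theorem greenLeL_of_mem_TS {x : S × S × R2} (hx : x ∈ TS S) : greenLeL x.1 x.2.1 := by
  induction hx using Subsemigroup.closure_induction with
  | mem x hx => exact hx.2
  | mul x y _ _ hx _ =>
    rw [mul_eq_mk_coord]
    exact hx.mul_right _

theorem isBiIdeal_of_diag_mem (hS : IsRegularSemigroup S) {R : Subsemigroup ↥(TS S)}
    (hdiag : ∀ s : S, ∃ hs : ((s, s, R2.σ) : S × S × R2) ∈ TS S,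
      (⟨(s, s, R2.σ), hs⟩ : ↥(TS S)) ∈ R) : IsBiIdeal R := by
  intro x hx z y hy
  obtain ⟨r, hr⟩ := exists_mul_mul_eq_mul_diag_mul (x : S × S × R2) z
    (greenLeL_of_mem_TS y.2) (hS _)
  obtain ⟨hrT, hrR⟩ := hdiag r
  have hxzy : x * z * y = x * ⟨(r, r, R2.σ), hrT⟩ * y := Subtype.ext hr
  exact hxzy ▸ R.mul_mem (R.mul_mem hx hrR) hy

end SemidirectProductBiIdeal

/-- for a regular subsemigroup `R` of `T(S)` containing the image of
the embedding `φ : s ↦ (s,s,σ)`, the Green relations and the natural partial order of `R`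
are the restrictions to `R` of those of `T(S)`. -/
theorem statement_17 {S : Type*} [Semigroup S] (hS : IsRegularSemigroup S)
    (R : Subsemigroup ↥(TS S))
    (hRreg : ∀ x ∈ R, ∃ y ∈ R, x * y * x = x)
    (hRphi : ∀ s : S, ∃ hs : ((s, s, R2.σ) : S × S × R2) ∈ TS S,
        (⟨(s, s, R2.σ), hs⟩ : ↥(TS S)) ∈ R) :
    ∀ x y : ↥R,
      (greenH x y ↔ greenH (x : ↥(TS S)) (y : ↥(TS S))) ∧
      (greenL x y ↔ greenL (x : ↥(TS S)) (y : ↥(TS S))) ∧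
      (greenR x y ↔ greenR (x : ↥(TS S)) (y : ↥(TS S))) ∧
      (greenD x y ↔ greenD (x : ↥(TS S)) (y : ↥(TS S))) ∧
      (greenJ x y ↔ greenJ (x : ↥(TS S)) (y : ↥(TS S))) ∧
      (natLe x y ↔ natLe (x : ↥(TS S)) (y : ↥(TS S))) := by
  have hreg : IsRegularSemigroup R := by
    rintro ⟨x, hx⟩
    obtain ⟨y, hy, hxyx⟩ := hRreg x hx
    exact ⟨⟨y, hy⟩, Subtype.ext hxyx⟩
  have hbi : IsBiIdeal R := isBiIdeal_of_diag_mem hS hRphi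
  intro x y
  exact ⟨greenH_coe_iff (hreg x) (hreg y), greenL_coe_iff (hreg x) (hreg y),
    greenR_coe_iff (hreg x) (hreg y), hbi.greenD_coe_iff hreg, hbi.greenJ_coe_iff hreg,
    natLe_coe_iff (hreg y)⟩

end SemibandEmbed
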